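/- Let (T_n) be a sequence of subsets of ℝ with accumulating renormalizations, and let (g_n) be a sequence in G = PSL(2,ℂ) with g_n → e and g_n ∉ AN for all n. Then the set AV ∩ limsup_n {u_t g_n u_s : t ∈ T_n, s ∈ ℝ} accumulates at e and at ∞. -/

import Mathlib

open scoped MatrixGroups
open Matrix Filter

noncomputable section

/-- `SL(2,ℂ)`. -/
abbrev SL2C := Matrix.SpecialLinearGroup (Fin 2) ℂ

instance : TopologicalSpace SL2C := instTopologicalSpaceSubtype

/-- `G = PSL(2,ℂ) = SL(2,ℂ)/{±I}`, with the quotient topology. -/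
abbrev PSL2C := Matrix.ProjectiveSpecialLinearGroup (Fin 2) ℂ

/-- The projection `π : SL(2,ℂ) → PSL(2,ℂ)`. -/
def pr : SL2C →* PSL2C := QuotientGroup.mk' _

/-- The upper triangular unipotent matrix `[[1, t],[0, 1]]` as an element of `SL(2,ℂ)`. -/
def uMat (t : ℂ) : SL2C := ⟨!![1, t; 0, 1], by simp [Matrix.det_fin_two_of]⟩

/-- `u_t = π [[1, t],[0, 1]]` for `t ∈ ℝ`. -/
def uu (t : ℝ) : PSL2C := pr (uMat t)

/-- `v_s = π [[1, is],[0, 1]]` for `s ∈ ℝ`. -/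
def vv (s : ℝ) : PSL2C := pr (uMat (s * Complex.I))

/-- The subgroup `U = {u_t : t ∈ ℝ}` as a subset of `PSL(2,ℂ)`. -/
def Uset : Set PSL2C := Set.range uu

/-- The subgroup `V = {v_s : s ∈ ℝ}` as a subset of `PSL(2,ℂ)`. -/
def Vset : Set PSL2C := Set.range vv

/-- The subgroup `N = {π [[1, z],[0,1]] : z ∈ ℂ}` as a subset of `PSL(2,ℂ)`. -/
def Nset : Set PSL2C := {x | ∃ z : ℂ, x = pr (uMat z)}

/-- `H = π (SL(2,ℝ))`, the image in `PSL(2,ℂ)` of the real matrices. -/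
def Hset : Set PSL2C :=
  {x | ∃ g : Matrix.SpecialLinearGroup (Fin 2) ℝ,
    x = pr (Matrix.SpecialLinearGroup.map (algebraMap ℝ ℂ) g)}

/-- The upper triangular matrix `[[a, z],[0, a⁻¹]]` as an element of `SL(2,ℂ)`,
for a nonzero real `a`. -/
def tri (a : ℝ) (ha : a ≠ 0) (z : ℂ) : SL2C :=
  ⟨!![(a : ℂ), z; 0, (a : ℂ)⁻¹], by
    have h : (a : ℂ) ≠ 0 := by exact_mod_cast ha
    simp [Matrix.det_fin_two_of, mul_inv_cancel₀ h]⟩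

/-- `AN = {π [[a, z],[0, a⁻¹]] : a > 0 real, z ∈ ℂ}`. -/
def ANset : Set PSL2C := {x | ∃ (a : ℝ) (ha : 0 < a) (z : ℂ), x = pr (tri a ha.ne' z)}

/-- `AV = {π [[a, ib],[0, a⁻¹]] : a > 0 real, b ∈ ℝ}`. -/
def AVset : Set PSL2C :=
  {x | ∃ (a : ℝ) (ha : 0 < a) (b : ℝ), x = pr (tri a ha.ne' (b * Complex.I))}

/-- `A = {π diag(a, a⁻¹) : a > 0 real}`. -/
def Aset : Set PSL2C := {x | ∃ (a : ℝ) (ha : 0 < a), x = pr (tri a ha.ne' 0)}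

variable (Γ : Subgroup PSL2C)

/-- The space `Γ\\G` of right cosets `Γg`, with the quotient topology. -/
abbrev XΓ := Quotient (QuotientGroup.rightRel Γ)

/-- The natural projection `G → Γ\\G`. -/
def mkX (g : PSL2C) : XΓ Γ := Quotient.mk'' g

/-- The right translation action of `G` on `Γ\\G`: `(Γg₀)·g = Γ(g₀g)`. -/
def act (x : XΓ Γ) (g : PSL2C) : XΓ Γ :=
  Quotient.map' (fun h => h * g)
    (fun a b hab => by
      rw [QuotientGroup.rightRel_apply] at hab ⊢
      simpa [_root_.mul_inv_rev, mul_assoc] using hab) x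

/-- The orbit `xS = {x·s : s ∈ S}` of a point `x ∈ Γ\\G` under a subset `S ⊆ G`. -/
def orb (x : XΓ Γ) (S : Set PSL2C) : Set (XΓ Γ) := (fun s => act Γ x s) '' S

/-- `Γ` is a lattice in `G`: there is a nonzero finite Borel measure on `Γ\\G`
invariant under the right translation action of `G`. -/
def IsLattice : Prop :=
  letI : MeasurableSpace (XΓ Γ) := borel _
  ∃ μ : MeasureTheory.Measure (XΓ Γ), μ ≠ 0 ∧ MeasureTheory.IsFiniteMeasure μ ∧
    ∀ g : PSL2C, MeasureTheory.Measure.map (fun x => act Γ x g) μ = μ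


/-- The topological `limsup` of a sequence of subsets of a topological space:
the set of points `x` such that every neighborhood of `x` meets `Q n` for
infinitely many `n`. -/
def seqLimsup {α : Type*} [TopologicalSpace α] (Q : ℕ → Set α) : Set α :=
  {x | ∀ O ∈ nhds x, {n | (O ∩ Q n).Nonempty}.Infinite}


/-- A sequence `T : ℕ → Set ℝ` has accumulating renormalizations if for every
sequence `λ_n → +∞` of positive reals, the set `T_∞ = limsup_n λ_n⁻¹ T_n`
contains a sequence of nonzero elements tending to `0`, as well as a sequence
whose absolute values tend to `+∞`. -/
def HasAccumulatingRenormalizations (T : ℕ → Set ℝ) : Prop :=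
  ∀ lam : ℕ → ℝ, (∀ n, 0 < lam n) → Tendsto lam atTop atTop →
    (∃ s : ℕ → ℝ,
      (∀ k, s k ∈ seqLimsup (fun n => (fun t => (lam n)⁻¹ * t) '' T n) ∧ s k ≠ 0) ∧
      Tendsto s atTop (nhds 0)) ∧
    (∃ s : ℕ → ℝ,
      (∀ k, s k ∈ seqLimsup (fun n => (fun t => (lam n)⁻¹ * t) '' T n)) ∧
      Tendsto (fun k => |s k|) atTop atTop)

/-- A single subset `T ⊆ ℝ` has accumulating renormalizations if the constant
sequence `T_n = T` does. -/
def HasAccumulatingRenormalizationsSet (T : Set ℝ) : Prop :=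
  HasAccumulatingRenormalizations (fun _ => T)


/-- A subset `S ⊆ PSL(2,ℂ)` accumulates at `e` and at `∞`: `S ∖ {e}` contains a
sequence converging to `e`, and `S` contains a sequence eventually leaving
every compact subset. -/
def AccumulatesAtIdAndInfty (S : Set PSL2C) : Prop :=
  (∃ s : ℕ → PSL2C, (∀ k, s k ∈ S ∧ s k ≠ 1) ∧ Tendsto s atTop (nhds 1)) ∧
  (∃ s : ℕ → PSL2C, (∀ k, s k ∈ S) ∧
    ∀ K : Set PSL2C, IsCompact K → ∀ᶠ k in atTop, s k ∉ K)


lemma diag_aux (E : ℕ → ℕ → Prop) (h : ∀ k, ∀ᶠ n in atTop, E k n) :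
    ∃ κ : ℕ → ℕ, Tendsto κ atTop atTop ∧ ∀ᶠ n in atTop, E (κ n) n := by
  have h' : ∀ k, ∃ N, ∀ n ≥ N, E k n := fun k => eventually_atTop.1 (h k)
  choose N hN using h'
  classical
  refine ⟨fun n => Nat.findGreatest (fun k => N k ≤ n) n, ?_, ?_⟩
  · rw [tendsto_atTop]
    intro K
    filter_upwards [eventually_ge_atTop K, eventually_ge_atTop (N K)] with n h1 h2
    exact Nat.le_findGreatest h1 h2
  · filter_upwards [eventually_ge_atTop (N 0)] with n hn
    apply hN
    exact Nat.findGreatest_spec (P := fun k => N k ≤ n) (Nat.zero_le n) hn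

lemma pigeon_aux (x1 x2 x3 x4 β γ : ℝ) (h12 : x1 ≤ x2) (h23 : x2 ≤ x3) (h34 : x3 ≤ x4) :
    (¬ (x1 ≤ β ∧ β < x2) ∧ ¬ (x1 ≤ γ ∧ γ < x2)) ∨
    (¬ (x2 ≤ β ∧ β < x3) ∧ ¬ (x2 ≤ γ ∧ γ < x3)) ∨
    (¬ (x3 ≤ β ∧ β < x4) ∧ ¬ (x3 ≤ γ ∧ γ < x4)) := by
  grind

/-- `t` and `b` are not of comparable size. -/
def okk (b t : ℝ) : Prop := |b| < |t| / 2 ∨ 2 * |t| < |b|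

/-- unpacking an element of the renormalized limsup -/
lemma limsup_aux (T : ℕ → Set ℝ) (w : ℕ → ℝ) (hw : ∀ n, 0 < w n) (τ : ℝ) (hτ0 : τ ≠ 0)
    (h : τ ∈ seqLimsup (fun n => (fun t => (w n)⁻¹ * t) '' T n)) :
    ∃ᶠ n in atTop, ∃ t ∈ T n, |τ| / 2 * w n ≤ |t| ∧ |t| ≤ 3 / 2 * |τ| * w n := by
  have hp : 0 < |τ| := abs_pos.2 hτ0
  have := h (Metric.ball τ (|τ| / 2)) (Metric.ball_mem_nhds _ (by positivity))
  rw [← Nat.frequently_atTop_iff_infinite] at this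
  refine this.mono ?_
  rintro n ⟨y, hy, t, ht, rfl⟩
  refine ⟨t, ht, ?_⟩
  rw [Metric.mem_ball, Real.dist_eq] at hy
  have hwn := hw n
  set y := (w n)⁻¹ * t with hydef
  have ht' : t = w n * y := by rw [hydef]; field_simp
  have e1 : |t| = w n * |y| := by rw [ht', abs_mul, abs_of_pos hwn]
  have h1 : |τ| - |y| ≤ |τ - y| := abs_sub_abs_le_abs_sub _ _
  have h2 : |y| - |τ| ≤ |y - τ| := abs_sub_abs_le_abs_sub _ _
  rw [abs_sub_comm] at h1
  rw [e1]
  constructor <;> nlinarith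

lemma small_aux (T : ℕ → Set ℝ) (hT : HasAccumulatingRenormalizations T)
    (lam : ℕ → ℝ) (hl : ∀ n, 0 < lam n) (hlt : Tendsto lam atTop atTop) (b1 b2 : ℕ → ℝ)
    (δ : ℝ) (hδ : 0 < δ) :
    ∃ η > 0, ∃ᶠ n in atTop, ∃ t ∈ T n, η * lam n ≤ |t| ∧ |t| ≤ δ * lam n ∧
      okk (b1 n) t ∧ okk (b2 n) t := by
  by_contra hcon
  push Not at hcon
  obtain ⟨κ, hκ, hE⟩ := diag_aux (fun k n => ((k : ℝ) + 2) ^ 4 ≤ lam n ∧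
      ∀ t ∈ T n, (((k : ℝ) + 2) ^ 4)⁻¹ * lam n ≤ |t| → |t| ≤ δ * lam n →
        okk (b1 n) t → ¬ okk (b2 n) t) (by
    intro k
    have := hcon (((k : ℝ) + 2) ^ 4)⁻¹ (by positivity)
    exact (hlt.eventually_ge_atTop _).and this)
  set s : ℕ → ℝ := fun n => (κ n : ℝ) + 2 with hs
  have hs2 : ∀ n, 2 ≤ s n := fun n => by simp [hs]
  have hst : Tendsto s atTop atTop :=
    tendsto_atTop_add_const_right _ _ (tendsto_natCast_atTop_atTop.comp hκ)
  have hex : ∀ n, ∃ w : ℝ, 0 < w ∧ lam n ≤ w * s n ^ 3 ∧ w * s n ≤ lam n ∧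
      ¬ (w ≤ |b1 n| * s n ∧ |b1 n| < w) ∧ ¬ (w ≤ |b2 n| * s n ∧ |b2 n| < w) := by
    intro n
    have hsn := hs2 n
    have hln := hl n
    have hs0 : 0 < s n := by linarith
    have hstep : ∀ x : ℝ, 0 < x → x / s n ≤ x := fun x hx => by
      rw [div_le_iff₀ hs0]; nlinarith
    have q1 : 0 < lam n / s n := by positivity
    have q2 : 0 < lam n / s n / s n := by positivity
    have q3 : 0 < lam n / s n / s n / s n := by positivity
    have key := pigeon_aux (lam n / s n / s n / s n / s n) (lam n / s n / s n / s n)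
      (lam n / s n / s n) (lam n / s n) |b1 n| |b2 n| (hstep _ q3) (hstep _ q2) (hstep _ q1)
    have m1 : lam n / s n * s n = lam n := by field_simp
    have m2 : lam n / s n / s n * s n ^ 2 = lam n := by field_simp
    have m3 : lam n / s n / s n / s n * s n ^ 3 = lam n := by field_simp
    have p1 : 1 ≤ s n := by linarith
    have p2 : 1 ≤ s n ^ 2 := by nlinarith
    rcases key with h | h | h
    · refine ⟨_, q3, m3.ge, ?_, ?_, ?_⟩
      · rw [div_mul_cancel₀ _ hs0.ne']
        exact (hstep _ q1).trans (hstep _ hln)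
      · simpa only [div_le_iff₀ hs0] using h.1
      · simpa only [div_le_iff₀ hs0] using h.2
    · refine ⟨_, q2, ?_, ?_, ?_, ?_⟩
      · rw [show s n ^ 3 = s n ^ 2 * s n by ring, ← mul_assoc, m2]; nlinarith
      · rw [div_mul_cancel₀ _ hs0.ne']
        exact (hstep _ hln)
      · simpa only [div_le_iff₀ hs0] using h.1
      · simpa only [div_le_iff₀ hs0] using h.2
    · refine ⟨_, q1, ?_, m1.le, ?_, ?_⟩
      · rw [show s n ^ 3 = s n * s n ^ 2 by ring, ← mul_assoc, m1]; nlinarith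
      · simpa only [div_le_iff₀ hs0] using h.1
      · simpa only [div_le_iff₀ hs0] using h.2
  choose w hw0 hw1 hw2 hw3 hw4 using hex
  have hwt : Tendsto w atTop atTop := by
    refine tendsto_atTop_mono' _ ?_ hst
    filter_upwards [hE] with n hn
    have h1 : s n ^ 4 ≤ lam n := hn.1
    have h2 := hw1 n
    have h3 : s n * s n ^ 3 ≤ w n * s n ^ 3 := by nlinarith
    have : 0 < s n ^ 3 := by have := hs2 n; positivity
    exact le_of_mul_le_mul_right h3 this
  obtain ⟨⟨σ, hσ, hσt⟩, -⟩ := hT w hw0 hwt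
  obtain ⟨k, hk⟩ := (hσt.eventually (Metric.ball_mem_nhds (0:ℝ) (show (0:ℝ) < 1/8 by norm_num))).exists
  obtain ⟨hmem, hne⟩ := hσ k
  set τ := σ k
  have hτ : |τ| < 1 / 8 := by simpa using hk
  have hτ0 : 0 < |τ| := abs_pos.2 hne
  have hf := limsup_aux T w hw0 τ hne hmem
  obtain ⟨n, ⟨t, ht, ht1, ht2⟩, hEn, hA, hB⟩ := (hf.and_eventually (hE.and
    ((hst.eventually_ge_atTop (1 / δ)).and (hst.eventually_ge_atTop (4 / |τ|))))).exists
  have hsn := hs2 n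
  have hw := hw0 n
  rw [div_le_iff₀ hδ] at hA
  rw [div_le_iff₀ hτ0] at hB
  have k1 : ((s n) ^ 4)⁻¹ * lam n ≤ |t| := by
    rw [inv_mul_le_iff₀ (by positivity)]
    have h3 := hw1 n
    have : 0 < s n ^ 3 := by positivity
    have : s n ^ 3 * (w n * 1) ≤ s n ^ 3 * (s n * |t|) := by
      apply mul_le_mul_of_nonneg_left _ this.le
      have : s n * (|τ| / 2 * w n) ≤ s n * |t| := mul_le_mul_of_nonneg_left ht1 (by linarith)
      nlinarith
    nlinarith
  have k2 : |t| ≤ δ * lam n := by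
    have := hw2 n
    have h1 : w n ≤ δ * (w n * s n) := by nlinarith
    have : δ * (w n * s n) ≤ δ * lam n := mul_le_mul_of_nonneg_left this hδ.le
    nlinarith
  have k3 : ∀ b : ℝ, ¬ (w n ≤ |b| * s n ∧ |b| < w n) → okk b t := by
    intro b hb
    by_contra hno
    unfold okk at hno
    push Not at hno
    apply hb
    constructor
    · have : |τ| / 4 * w n ≤ |b| := by linarith
      have : |τ| / 4 * w n * s n ≤ |b| * s n := mul_le_mul_of_nonneg_right this (by linarith)
      nlinarith
    · nlinarith
  exact hEn.2 t ht k1 k2 (k3 _ (hw3 n)) (k3 _ (hw4 n))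

lemma large_aux (T : ℕ → Set ℝ) (hT : HasAccumulatingRenormalizations T)
    (lam : ℕ → ℝ) (hl : ∀ n, 0 < lam n) (hlt : Tendsto lam atTop atTop) (b1 b2 : ℕ → ℝ)
    (R : ℝ) (hR : 0 < R) :
    ∃ M > 0, ∃ᶠ n in atTop, ∃ t ∈ T n, R * lam n ≤ |t| ∧ |t| ≤ M * lam n ∧
      okk (b1 n) t ∧ okk (b2 n) t := by
  by_contra hcon
  push Not at hcon
  obtain ⟨κ, hκ, hE⟩ := diag_aux (fun k n =>
      ∀ t ∈ T n, R * lam n ≤ |t| → |t| ≤ ((k : ℝ) + 2) ^ 4 * lam n →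
        okk (b1 n) t → ¬ okk (b2 n) t) (by
    intro k
    exact hcon (((k : ℝ) + 2) ^ 4) (by positivity))
  set s : ℕ → ℝ := fun n => (κ n : ℝ) + 2 with hs
  have hs2 : ∀ n, 2 ≤ s n := fun n => by simp [hs]
  have hst : Tendsto s atTop atTop :=
    tendsto_atTop_add_const_right _ _ (tendsto_natCast_atTop_atTop.comp hκ)
  have hex : ∀ n, ∃ w : ℝ, 0 < w ∧ w ≤ lam n * s n ^ 3 ∧ lam n * s n ≤ w ∧
      ¬ (w ≤ |b1 n| ∧ |b1 n| < w * s n) ∧ ¬ (w ≤ |b2 n| ∧ |b2 n| < w * s n) := by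
    intro n
    have hsn := hs2 n
    have hln := hl n
    have hs0 : 0 < s n := by linarith
    have hstep : ∀ x : ℝ, 0 < x → x ≤ x * s n := fun x hx => by nlinarith
    have q1 : 0 < lam n * s n := by positivity
    have q2 : 0 < lam n * s n * s n := by positivity
    have q3 : 0 < lam n * s n * s n * s n := by positivity
    have key := pigeon_aux (lam n * s n) (lam n * s n * s n)
      (lam n * s n * s n * s n) (lam n * s n * s n * s n * s n) |b1 n| |b2 n|
      (hstep _ q1) (hstep _ q2) (hstep _ q3)
    have e3 : lam n * s n ^ 3 = lam n * s n * s n * s n := by ring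
    rw [e3]
    rcases key with h | h | h
    · exact ⟨_, q1, (hstep _ q1).trans (hstep _ q2), le_rfl, h.1, h.2⟩
    · exact ⟨_, q2, (hstep _ q2), hstep _ q1, h.1, h.2⟩
    · exact ⟨_, q3, le_rfl, (hstep _ q1).trans (hstep _ q2), h.1, h.2⟩
  choose w hw0 hw1 hw2 hw3 hw4 using hex
  have hwt : Tendsto w atTop atTop := by
    refine tendsto_atTop_mono ?_ hlt
    intro n
    have := hw2 n; have := hs2 n; have := hl n
    nlinarith
  obtain ⟨-, ⟨σ, hσ, hσt⟩⟩ := hT w hw0 hwt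
  obtain ⟨k, hk⟩ := (hσt.eventually_ge_atTop 8).exists
  have hmem := hσ k
  set τ := σ k
  have hτ0 : 0 < |τ| := by linarith
  have hf := limsup_aux T w hw0 τ (abs_pos.1 hτ0) hmem
  obtain ⟨n, ⟨t, ht, ht1, ht2⟩, hEn, hA, hB⟩ := (hf.and_eventually (hE.and
    ((hst.eventually_ge_atTop R).and (hst.eventually_ge_atTop (4 * |τ|))))).exists
  have hsn := hs2 n
  have hw := hw0 n
  have hln := hl n
  have k1 : R * lam n ≤ |t| := by
    have := hw2 n
    nlinarith
  have k2 : |t| ≤ (s n) ^ 4 * lam n := by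
    have := hw1 n
    have h1 : |t| ≤ s n * w n := by nlinarith
    have : s n * w n ≤ s n * (lam n * s n ^ 3) := mul_le_mul_of_nonneg_left this (by linarith)
    nlinarith
  have k3 : ∀ b : ℝ, ¬ (w n ≤ |b| ∧ |b| < w n * s n) → okk b t := by
    intro b hb
    by_contra hno
    unfold okk at hno
    push Not at hno
    apply hb
    constructor <;> nlinarith
  exact hEn t ht k1 k2 (k3 _ (hw3 n)) (k3 _ (hw4 n))

/-- consequence of `okk` for linear forms -/
lemma okk_lin (P Q t : ℝ) (h : okk (-P / Q) t) : |P| ≤ 2 * |P + Q * t| ∧ |Q * t| ≤ 2 * |P + Q * t| := by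
  by_cases hQ : Q = 0
  · subst hQ; simp; linarith [abs_nonneg P]
  · have hQ' : 0 < |Q| := abs_pos.2 hQ
    unfold okk at h
    rw [abs_div, abs_neg, div_lt_iff₀ hQ', lt_div_iff₀ hQ'] at h
    have e : |Q * t| = |t| * |Q| := by rw [abs_mul, mul_comm]
    have h1 : |P| - |Q * t| ≤ |P + Q * t| := by
      have := abs_sub_abs_le_abs_sub P (-(Q * t)); rwa [abs_neg, sub_neg_eq_add] at this
    have h2 : |Q * t| - |P| ≤ |P + Q * t| := by
      have := abs_sub_abs_le_abs_sub (Q * t) (-P); rwa [abs_neg, sub_neg_eq_add, add_comm] at this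
    rw [e] at *
    rcases h with h | h <;> constructor <;> nlinarith

lemma continuousMul_SL2C : ContinuousMul SL2C :=
  ⟨Continuous.subtype_mk ((continuous_subtype_val.comp continuous_fst).mul
    (continuous_subtype_val.comp continuous_snd)) _⟩

lemma continuous_pr : Continuous pr := continuous_quotient_mk'

lemma isOpenMap_pr : IsOpenMap pr := by
  have := continuousMul_SL2C
  exact QuotientGroup.isOpenMap_coe

lemma continuous_entry (i j : Fin 2) : Continuous (fun h : SL2C => h i j) :=
  (continuous_apply_apply i j).comp continuous_subtype_val

lemma tendsto_SL2C {f : ℕ → SL2C} {x : SL2C}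
    (h : ∀ i j, Tendsto (fun n => f n i j) atTop (nhds (x i j))) : Tendsto f atTop (nhds x) := by
  refine tendsto_subtype_rng.2 ?_
  refine tendsto_pi_nhds.2 fun i => ?_
  rw [tendsto_pi_nhds]
  exact fun j => h i j

lemma pr_eq_imp {h h' : SL2C} (e : pr h = pr h') :
    ∃ ε : ℂ, (ε = 1 ∨ ε = -1) ∧ ∀ i j, h' i j = ε * h i j := by
  have e1 : h⁻¹ * h' ∈ Subgroup.center SL2C := QuotientGroup.eq.1 e
  rw [Matrix.SpecialLinearGroup.mem_center_iff] at e1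
  obtain ⟨r, hr, hr2⟩ := e1
  have hr' : r = 1 ∨ r = -1 := by
    rw [Fintype.card_fin] at hr
    have : (r - 1) * (r + 1) = 0 := by linear_combination hr
    rcases mul_eq_zero.1 this with h1 | h1
    · exact Or.inl (by linear_combination h1)
    · exact Or.inr (by linear_combination h1)
  refine ⟨r, hr', fun i j => ?_⟩
  have e2 : (h' : Matrix (Fin 2) (Fin 2) ℂ) = h * scalar (Fin 2) r := by
    rw [hr2, ← Matrix.SpecialLinearGroup.coe_mul, mul_inv_cancel_left]
  have := congrFun (congrFun e2 i) j
  rw [this]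
  simp [Matrix.scalar_apply, mul_comm]

lemma pr_neg (h : SL2C) : pr (-h) = pr h := by
  symm
  apply QuotientGroup.eq.2
  rw [Matrix.SpecialLinearGroup.mem_center_iff]
  refine ⟨-1, by simp, ?_⟩
  have : h⁻¹ * -h = -1 := by simp
  rw [this]
  ext i j
  fin_cases i <;> fin_cases j <;> simp

lemma exists_lift (g : ℕ → PSL2C) (hg : Tendsto g atTop (nhds 1)) :
    ∃ h : ℕ → SL2C, (∀ n, pr (h n) = g n) ∧ Tendsto h atTop (nhds 1) := by
  have hex : ∀ n, ∃ h : SL2C, pr h = g n ∧ 0 ≤ (h 0 0).re := by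
    intro n
    obtain ⟨h, hh⟩ := QuotientGroup.mk'_surjective _ (g n)
    rcases le_total 0 (h 0 0).re with h0 | h0
    · exact ⟨h, hh, h0⟩
    · exact ⟨-h, (pr_neg h).trans hh, by simpa using h0⟩
  choose h hh h0 using hex
  refine ⟨h, hh, ?_⟩
  intro W hW
  have hpos : {x : SL2C | 0 < (x 0 0).re} ∈ nhds (1 : SL2C) := by
    apply IsOpen.mem_nhds
    · exact isOpen_lt continuous_const (Complex.continuous_re.comp (continuous_entry 0 0))
    · simp
  have hn := isOpenMap_pr.image_mem_nhds (Filter.inter_mem hW hpos)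
  rw [map_one] at hn
  show ∀ᶠ n in atTop, h n ∈ W
  filter_upwards [hg.eventually hn] with n hn
  obtain ⟨x, ⟨hxW, hx0⟩, hx⟩ := hn
  obtain ⟨ε, hε, e⟩ := pr_eq_imp (hx.trans (hh n).symm)
  rcases hε with rfl | rfl
  · have : h n = x := by ext i j; simpa using e i j
    rwa [this]
  · exfalso
    have := h0 n
    rw [e 0 0] at this
    simp at this hx0
    linarith

/-- a continuous function on `PSL2C` that measures the size of the top row -/
lemma exists_size : ∃ F : PSL2C → ℝ, Continuous F ∧
    ∀ h : SL2C, F (pr h) = ‖h 0 0‖ + ‖h 0 1‖ := by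
  refine ⟨Quotient.lift (fun h : SL2C => ‖h 0 0‖ + ‖h 0 1‖) ?_, ?_, fun h => rfl⟩
  · intro x y hxy
    have : pr x = pr y := Quotient.sound hxy
    obtain ⟨ε, hε, e⟩ := pr_eq_imp this
    simp only [e]
    rcases hε with rfl | rfl <;> simp
  · apply Continuous.quotient_lift
    exact ((continuous_entry 0 0).norm).add ((continuous_entry 0 1).norm)

lemma tri_mem_AV (a : ℝ) (ha : a ≠ 0) (b : ℝ) : pr (tri a ha (b * Complex.I)) ∈ AVset := by
  rcases lt_or_gt_of_ne ha with h | h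
  · refine ⟨-a, by linarith, -b, ?_⟩
    rw [← pr_neg]
    congr 1
    ext i j
    rw [Matrix.SpecialLinearGroup.coe_neg]
    fin_cases i <;> fin_cases j <;> simp [tri, inv_neg]
  · exact ⟨a, h, b, rfl⟩

lemma alg_aux (a b c d : ℂ) (t : ℝ) (hα : a.re + t * c.re ≠ 0) :
    b + t * d + ((-(b + t * d).re / (a.re + t * c.re) : ℝ) : ℂ) * (a + t * c) =
    (((b.im * a.re - b.re * a.im + t * ((d.im * a.re - d.re * a.im) + (b.im * c.re - b.re * c.im))
      + t ^ 2 * (d.im * c.re - d.re * c.im)) / (a.re + t * c.re) : ℝ) : ℂ) * Complex.I := by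
  apply Complex.ext
  · simp only [Complex.add_re, Complex.mul_re, Complex.ofReal_re, Complex.ofReal_im, Complex.I_re,
      Complex.I_im, Complex.add_im, Complex.mul_im]
    field_simp
    ring
  · simp only [Complex.add_re, Complex.mul_re, Complex.ofReal_re, Complex.ofReal_im, Complex.I_re,
      Complex.I_im, Complex.add_im, Complex.mul_im]
    field_simp
    ring

/-- `Im (d ā + b c̄)` -/
def PP (h : SL2C) : ℝ :=
  ((h 1 1).im * (h 0 0).re - (h 1 1).re * (h 0 0).im)
    + ((h 0 1).im * (h 1 0).re - (h 0 1).re * (h 1 0).im)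

/-- `Im (d c̄)` -/
def QQ (h : SL2C) : ℝ := (h 1 1).im * (h 1 0).re - (h 1 1).re * (h 1 0).im

def mm (h : SL2C) : ℝ := |PP h| + √|QQ h| + |(h 1 0).re|

lemma continuous_PP : Continuous PP := by
  have hr := fun i j => Complex.continuous_re.comp (continuous_entry i j)
  have hi := fun i j => Complex.continuous_im.comp (continuous_entry i j)
  exact (((hi 1 1).mul (hr 0 0)).sub ((hr 1 1).mul (hi 0 0))).add
    (((hi 0 1).mul (hr 1 0)).sub ((hr 0 1).mul (hi 1 0)))

lemma continuous_QQ : Continuous QQ := by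
  have hr := fun i j => Complex.continuous_re.comp (continuous_entry i j)
  have hi := fun i j => Complex.continuous_im.comp (continuous_entry i j)
  exact (((hi 1 1).mul (hr 1 0)).sub ((hr 1 1).mul (hi 1 0)))

lemma continuous_mm : Continuous mm := by
  have hr := Complex.continuous_re.comp (continuous_entry 1 0)
  exact (continuous_PP.abs.add (Real.continuous_sqrt.comp continuous_QQ.abs)).add hr.abs

lemma mm_one : mm 1 = 0 := by simp [mm, PP, QQ]

lemma mm_pos (h : SL2C) (ha : 0 < (h 0 0).re) (hd : 0 < (h 1 1).re) (hn : pr h ∉ ANset) :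
    0 < mm h := by
  by_contra hcon
  apply hn
  have h1 := abs_nonneg (PP h)
  have h2 := Real.sqrt_nonneg |QQ h|
  have h3 := abs_nonneg (h 1 0).re
  unfold mm at hcon
  have e1 : PP h = 0 := abs_eq_zero.1 (by linarith)
  have e3 : (h 1 0).re = 0 := abs_eq_zero.1 (by linarith)
  have e2 : QQ h = 0 := by
    have : √|QQ h| = 0 := by linarith
    rw [Real.sqrt_eq_zero (abs_nonneg _)] at this
    exact abs_eq_zero.1 this
  have e4 : (h 1 0).im = 0 := by
    unfold QQ at e2
    rw [e3] at e2
    have : (h 1 1).re * (h 1 0).im = 0 := by linarith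
    exact (mul_eq_zero.1 this).resolve_left hd.ne'
  have c0 : h 1 0 = 0 := Complex.ext e3 e4
  have hdet : h 0 0 * h 1 1 - h 0 1 * h 1 0 = 1 := by
    have := h.2; rwa [Matrix.det_fin_two] at this
  rw [c0] at hdet
  have hdet : h 0 0 * h 1 1 = 1 := by simpa using hdet
  have him := congrArg Complex.im hdet
  simp at him
  unfold PP at e1
  rw [e3, e4] at e1
  have e5 : (h 0 0).im = 0 := by
    have : (h 1 1).re * (h 0 0).im = 0 := by linarith
    exact (mul_eq_zero.1 this).resolve_left hd.ne'
  have ea : h 0 0 = ((h 0 0).re : ℂ) := Complex.ext rfl (by simpa using e5)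
  have ed : h 1 1 = ((h 0 0).re : ℂ)⁻¹ := by
    rw [← ea]; exact eq_inv_of_mul_eq_one_right hdet
  refine ⟨(h 0 0).re, ha, h 0 1, ?_⟩
  congr 1
  ext i j
  fin_cases i <;> fin_cases j
  · exact ea
  · rfl
  · exact c0
  · exact ed

lemma uMat_entries (h : SL2C) (t s : ℂ) (i j : Fin 2) :
    (uMat t * h * uMat s) i j = !![h 0 0 + t * h 1 0, h 0 1 + t * h 1 1 + s * (h 0 0 + t * h 1 0);
      h 1 0, h 1 1 + s * h 1 0] i j := by
  rw [Matrix.SpecialLinearGroup.coe_mul, Matrix.SpecialLinearGroup.coe_mul]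
  show ((!![1, t; 0, 1] * (h : Matrix (Fin 2) (Fin 2) ℂ)) * !![1, s; 0, 1]) i j = _
  rw [Matrix.eta_fin_two (h : Matrix (Fin 2) (Fin 2) ℂ), Matrix.mul_fin_two, Matrix.mul_fin_two]
  fin_cases i <;> fin_cases j <;> simp <;> ring

lemma core_aux (T : ℕ → Set ℝ) (h : ℕ → SL2C) (hh : Tendsto h atTop (nhds 1))
    (lam : ℕ → ℝ) (hl : ∀ n, 0 < lam n) (hlt : Tendsto lam atTop atTop)
    (hlm : ∀ᶠ n in atTop, lam n * mm (h n) = 1) (η M : ℝ)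
    (hf : ∃ᶠ n in atTop, ∃ t ∈ T n, η * lam n ≤ |t| ∧ |t| ≤ M * lam n ∧
      okk (-PP (h n) / QQ (h n)) t ∧ okk (-1 / (h n 1 0).re) t) :
    ∃ τ p q r : ℝ, η ≤ |τ| ∧ |τ| ≤ M ∧ |p| + √|q| + |r| = 1 ∧
      1 ≤ 2 * |1 + r * τ| ∧ |r * τ| ≤ 2 * |1 + r * τ| ∧
      |p| ≤ 2 * |p + q * τ| ∧ |q * τ| ≤ 2 * |p + q * τ| ∧
      ∀ h0 : 1 + r * τ ≠ 0,
        pr (tri (1 + r * τ) h0 (((p * τ + q * τ ^ 2) / (1 + r * τ) : ℝ) * Complex.I)) ∈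
          seqLimsup (fun n => {x | ∃ t ∈ T n, ∃ s : ℝ, x = uu t * pr (h n) * uu s}) := by
  obtain ⟨φ, hφ, hφP⟩ := extraction_of_frequently_atTop (hf.and_eventually hlm)
  choose hφP hφm using hφP
  choose t htT ht1 ht2 ht3 ht4 using hφP
  set X : ℕ → ℝ × ℝ × ℝ × ℝ := fun k =>
    (t k / lam (φ k), lam (φ k) * PP (h (φ k)), lam (φ k) ^ 2 * QQ (h (φ k)),
      lam (φ k) * (h (φ k) 1 0).re) with hX
  have hsum : ∀ k, |(X k).2.1| + √|(X k).2.2.1| + |(X k).2.2.2| = 1 := by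
    intro k
    have hp := hl (φ k)
    rw [← hφm k]
    simp only [hX, mm, abs_mul, abs_of_pos hp, abs_of_pos (pow_pos hp 2)]
    rw [Real.sqrt_mul (by positivity), Real.sqrt_sq hp.le]
    ring
  have hτ1 : ∀ k, η ≤ |(X k).1| := by
    intro k
    have hp := hl (φ k)
    simp only [hX, abs_div, abs_of_pos hp]
    rw [le_div_iff₀ hp]; exact ht1 k
  have hτ2 : ∀ k, |(X k).1| ≤ M := by
    intro k
    have hp := hl (φ k)
    simp only [hX, abs_div, abs_of_pos hp]
    rw [div_le_iff₀ hp]; exact ht2 k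
  have hρt : ∀ k, (h (φ k) 1 0).re * t k = (X k).2.2.2 * (X k).1 := by
    intro k
    have hp := (hl (φ k)).ne'
    simp only [hX]; field_simp
  have hr1 : ∀ k, (1 : ℝ) ≤ 2 * |1 + (X k).2.2.2 * (X k).1| := by
    intro k
    have := (okk_lin _ _ _ (ht4 k)).1
    rw [hρt k] at this; simpa using this
  have hr2 : ∀ k, |(X k).2.2.2 * (X k).1| ≤ 2 * |1 + (X k).2.2.2 * (X k).1| := by
    intro k
    have := (okk_lin _ _ _ (ht4 k)).2
    rwa [hρt k] at this
  have hq0 : ∀ k, (X k).2.2.1 * (X k).1 = lam (φ k) * (QQ (h (φ k)) * t k) := by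
    intro k
    have hp := (hl (φ k)).ne'
    simp only [hX]; field_simp
  have hpq : ∀ k, (X k).2.1 + (X k).2.2.1 * (X k).1 =
      lam (φ k) * (PP (h (φ k)) + QQ (h (φ k)) * t k) := by
    intro k
    rw [hq0, mul_add]
  have hp1 : ∀ k, |(X k).2.1| ≤ 2 * |(X k).2.1 + (X k).2.2.1 * (X k).1| := by
    intro k
    have hp := (hl (φ k))
    have := (okk_lin _ _ _ (ht3 k)).1
    rw [hpq k, show (X k).2.1 = lam (φ k) * PP (h (φ k)) from rfl, abs_mul, abs_mul, abs_of_pos hp]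
    nlinarith
  have hp2 : ∀ k, |(X k).2.2.1 * (X k).1| ≤ 2 * |(X k).2.1 + (X k).2.2.1 * (X k).1| := by
    intro k
    have hp := (hl (φ k))
    have := (okk_lin _ _ _ (ht3 k)).2
    rw [hpq k, hq0 k, abs_mul (lam (φ k)), abs_mul (lam (φ k)), abs_of_pos hp]
    nlinarith
  have hcpt : IsCompact ((Set.Icc (-M) M) ×ˢ (Set.Icc (-1 : ℝ) 1) ×ˢ (Set.Icc (-1 : ℝ) 1) ×ˢ
      (Set.Icc (-1 : ℝ) 1)) :=
    isCompact_Icc.prod (isCompact_Icc.prod (isCompact_Icc.prod isCompact_Icc))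
  have hXmem : ∀ k, X k ∈ ((Set.Icc (-M) M) ×ˢ (Set.Icc (-1 : ℝ) 1) ×ˢ (Set.Icc (-1 : ℝ) 1) ×ˢ
      (Set.Icc (-1 : ℝ) 1)) := by
    intro k
    have h1 := hsum k
    have h2 := abs_nonneg (X k).2.1
    have h3 := Real.sqrt_nonneg |(X k).2.2.1|
    have h4 := abs_nonneg (X k).2.2.2
    have h5 : |(X k).2.2.1| ≤ 1 := by
      have : √|(X k).2.2.1| ≤ 1 := by linarith
      rwa [Real.sqrt_le_one] at this
    exact ⟨abs_le.1 (hτ2 k), abs_le.1 (by linarith), abs_le.1 h5, abs_le.1 (by linarith)⟩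
  obtain ⟨⟨τ, p, q, r⟩, -, θ, hθ, hlim⟩ := hcpt.tendsto_subseq hXmem
  have lτ : Tendsto (fun k => (X (θ k)).1) atTop (nhds τ) :=
    (continuous_fst.tendsto _).comp hlim
  have lp : Tendsto (fun k => (X (θ k)).2.1) atTop (nhds p) :=
    ((continuous_fst.comp continuous_snd).tendsto _).comp hlim
  have lq : Tendsto (fun k => (X (θ k)).2.2.1) atTop (nhds q) :=
    ((continuous_fst.comp (continuous_snd.comp continuous_snd)).tendsto _).comp hlim
  have lr : Tendsto (fun k => (X (θ k)).2.2.2) atTop (nhds r) :=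
    ((continuous_snd.comp (continuous_snd.comp continuous_snd)).tendsto _).comp hlim
  have l1r := (lr.mul lτ).const_add 1
  have lpq := lp.add (lq.mul lτ)
  refine ⟨τ, p, q, r, ge_of_tendsto' lτ.abs fun k => hτ1 _, le_of_tendsto' lτ.abs fun k => hτ2 _,
    ?_, ge_of_tendsto' (l1r.abs.const_mul 2) fun k => hr1 _,
    le_of_tendsto_of_tendsto' (lr.mul lτ).abs (l1r.abs.const_mul 2) fun k => hr2 _,
    le_of_tendsto_of_tendsto' lp.abs (lpq.abs.const_mul 2) fun k => hp1 _,
    le_of_tendsto_of_tendsto' (lq.mul lτ).abs (lpq.abs.const_mul 2) fun k => hp2 _, ?_⟩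
  · refine tendsto_nhds_unique ((lp.abs.add lq.abs.sqrt).add lr.abs) ?_
    simp only [hsum]
    exact tendsto_const_nhds
  intro h0
  -- the subsequence
  set N : ℕ → ℕ := fun k => φ (θ k) with hN
  have hNm : StrictMono N := hφ.comp hθ
  have hNt : Tendsto N atTop atTop := hNm.tendsto_atTop
  have lh : Tendsto (fun k => h (N k)) atTop (nhds 1) := hh.comp hNt
  have le : ∀ i j, Tendsto (fun k => h (N k) i j) atTop (nhds ((1 : SL2C) i j)) := fun i j =>
    ((continuous_entry i j).tendsto _).comp lh
  have ler : ∀ i j, Tendsto (fun k => (h (N k) i j).re) atTop (nhds ((1 : SL2C) i j).re) :=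
    fun i j => (Complex.continuous_re.tendsto _).comp (le i j)
  have lei : ∀ i j, Tendsto (fun k => (h (N k) i j).im) atTop (nhds ((1 : SL2C) i j).im) :=
    fun i j => (Complex.continuous_im.tendsto _).comp (le i j)
  have la := ler 0 0
  have lai := lei 0 0
  have lb := ler 0 1
  have lbi := lei 0 1
  have ld := ler 1 1
  have ldi := lei 1 1
  have lc := le 1 0
  simp at la lai lb lbi ld ldi lc
  have ht : ∀ k, t (θ k) = lam (N k) * (X (θ k)).1 := by
    intro k
    have hp := (hl (N k)).ne'
    simp only [hX, hN] at *; field_simp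
  have lamN : Tendsto (fun k => lam (N k)) atTop atTop := hlt.comp hNt
  -- lam * Im c → 0
  have lci : Tendsto (fun k => lam (N k) * (h (N k) 1 0).im) atTop (nhds 0) := by
    have h1 : Tendsto (fun k => ((h (N k) 1 1).im * (X (θ k)).2.2.2 -
        (X (θ k)).2.2.1 * (lam (N k))⁻¹) / (h (N k) 1 1).re) atTop
        (nhds ((0 * r - q * 0) / 1)) :=
      ((ldi.mul lr).sub (lq.mul lamN.inv_tendsto_atTop)).div ld one_ne_zero
    simp only [zero_mul, mul_zero, sub_zero, zero_div] at h1
    refine h1.congr' ?_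
    filter_upwards [ld.eventually_ne one_ne_zero] with k hk
    have hp := (hl (N k)).ne'
    rw [div_eq_iff hk]
    simp only [hX, QQ]
    show _ * (lam (N k) * (h (N k) 1 0).re) - lam (N k) ^ 2 * ((h (N k) 1 1).im * (h (N k) 1 0).re -
      (h (N k) 1 1).re * (h (N k) 1 0).im) * (lam (N k))⁻¹ = _
    field_simp
    ring
  have lαr : Tendsto (fun k => (h (N k) 0 0).re + t (θ k) * (h (N k) 1 0).re) atTop
      (nhds (1 + r * τ)) := by
    have := la.add (lr.mul lτ)
    refine this.congr fun k => ?_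
    rw [← hρt (θ k), mul_comm]
  have lαi : Tendsto (fun k => (h (N k) 0 0).im + t (θ k) * (h (N k) 1 0).im) atTop
      (nhds 0) := by
    have := lai.add (lτ.mul lci)
    simp only [mul_zero, add_zero] at this
    refine this.congr fun k => ?_
    rw [ht k]; ring
  have lα : Tendsto (fun k => h (N k) 0 0 + t (θ k) * h (N k) 1 0) atTop
      (nhds ((1 + r * τ : ℝ) : ℂ)) := by
    have h1 := ((Complex.continuous_ofReal.tendsto _).comp lαr).add
      (((Complex.continuous_ofReal.tendsto _).comp lαi).mul_const Complex.I)
    simp only [Complex.ofReal_zero, zero_mul, add_zero] at h1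
    refine h1.congr fun k => ?_
    apply Complex.ext <;> simp
  set s : ℕ → ℝ := fun k => -(h (N k) 0 1 + t (θ k) * h (N k) 1 1).re /
    ((h (N k) 0 0).re + t (θ k) * (h (N k) 1 0).re) with hs
  have lUR : Tendsto (fun k => h (N k) 0 1 + t (θ k) * h (N k) 1 1 +
      (s k : ℂ) * (h (N k) 0 0 + t (θ k) * h (N k) 1 0)) atTop
      (nhds ((((p * τ + q * τ ^ 2) / (1 + r * τ) : ℝ) : ℂ) * Complex.I)) := by
    have h1 : Tendsto (fun k => ((h (N k) 0 1).im * (h (N k) 0 0).re -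
        (h (N k) 0 1).re * (h (N k) 0 0).im + (X (θ k)).2.1 * (X (θ k)).1 +
        (X (θ k)).2.2.1 * (X (θ k)).1 ^ 2) /
        ((h (N k) 0 0).re + t (θ k) * (h (N k) 1 0).re)) atTop
        (nhds ((0 * 1 - 0 * 0 + p * τ + q * τ ^ 2) / (1 + r * τ))) :=
      (((((lbi.mul la).sub (lb.mul lai)).add (lp.mul lτ)).add (lq.mul (lτ.pow 2))).div lαr h0)
    simp only [zero_mul, sub_zero, zero_add] at h1
    have h2 := ((Complex.continuous_ofReal.tendsto _).comp h1).mul_const Complex.I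
    refine h2.congr' ?_
    filter_upwards [lαr.eventually_ne h0] with k hk
    rw [alg_aux _ _ _ _ _ hk]
    have e1 : (X (θ k)).2.1 * (X (θ k)).1 = t (θ k) * PP (h (N k)) := by
      have hp := (hl (N k)).ne'
      rw [ht k]; simp only [hX, hN] at *; field_simp
    have e2 : (X (θ k)).2.2.1 * (X (θ k)).1 ^ 2 = t (θ k) ^ 2 * QQ (h (N k)) := by
      have hp := (hl (N k)).ne'
      rw [ht k]; simp only [hX, hN] at *; field_simp
    simp only [Function.comp, e1, e2]
    rfl
  have hα0 : ((1 + r * τ : ℝ) : ℂ) ≠ 0 := by exact_mod_cast h0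
  have lδ : Tendsto (fun k => h (N k) 1 1 + (s k : ℂ) * h (N k) 1 0) atTop
      (nhds (((1 + r * τ : ℝ) : ℂ)⁻¹)) := by
    have h1 := ((lc.mul lUR).const_add 1).div lα hα0
    simp only [zero_mul, add_zero, one_div] at h1
    refine h1.congr' ?_
    filter_upwards [lα.eventually_ne hα0] with k hk
    rw [Pi.div_apply, div_eq_iff hk]
    have hdet : h (N k) 0 0 * h (N k) 1 1 - h (N k) 0 1 * h (N k) 1 0 = 1 := by
      have := (h (N k)).2; rwa [Matrix.det_fin_two] at this
    linear_combination -hdet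
  have lmat : Tendsto (fun k => uMat (t (θ k)) * h (N k) * uMat (s k)) atTop
      (nhds (tri (1 + r * τ) h0 (((p * τ + q * τ ^ 2) / (1 + r * τ) : ℝ) * Complex.I))) := by
    apply tendsto_SL2C
    intro i j
    fin_cases i <;> fin_cases j
    · refine lα.congr fun k => ?_
      exact (uMat_entries (h (N k)) (t (θ k)) (s k) 0 0).symm
    · refine lUR.congr fun k => ?_
      exact (uMat_entries (h (N k)) (t (θ k)) (s k) 0 1).symm
    · refine lc.congr fun k => ?_
      exact (uMat_entries (h (N k)) (t (θ k)) (s k) 1 0).symm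
    · refine lδ.congr fun k => ?_
      exact (uMat_entries (h (N k)) (t (θ k)) (s k) 1 1).symm
  have lfin := (continuous_pr.tendsto _).comp lmat
  intro O hO
  rw [← Nat.frequently_atTop_iff_infinite]
  refine hNt.frequently (Eventually.frequently ?_)
  filter_upwards [lfin.eventually hO] with k hk
  refine ⟨_, hk, t (θ k), htT (θ k), s k, ?_⟩
  simp [uu]

/-- Refined unipotent blowup: if `(T_n)` has accumulating renormalizations and
`g_n → e` in `G - AN`, then `AV ∩ limsup_n {u_t g_n u_s : t ∈ T_n, s ∈ ℝ}`
accumulates at `e` and at `∞`. -/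
theorem refined_unipotent_blowup_AN
    (T : ℕ → Set ℝ) (hT : HasAccumulatingRenormalizations T)
    (g : ℕ → PSL2C) (hconv : Tendsto g atTop (nhds 1)) (hg : ∀ n, g n ∉ ANset) :
    AccumulatesAtIdAndInfty
      (AVset ∩ seqLimsup (fun n => {x | ∃ t ∈ T n, ∃ s : ℝ, x = uu t * g n * uu s})) := by
  obtain ⟨h, hhg, hh⟩ := exists_lift g hconv
  have hgeq : g = fun n => pr (h n) := funext fun n => (hhg n).symm
  subst hgeq
  have ler : ∀ i, Tendsto (fun k => (h k i i).re) atTop (nhds 1) := fun i => by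
    have := (Complex.continuous_re.tendsto _).comp (((continuous_entry i i).tendsto _).comp hh)
    simpa [Function.comp_def] using this
  have hpos : ∀ᶠ n in atTop, 0 < mm (h n) := by
    filter_upwards [(ler 0).eventually_const_lt one_pos, (ler 1).eventually_const_lt one_pos]
      with n h1 h2
    exact mm_pos _ h1 h2 (hg n)
  have lmm : Tendsto (fun n => mm (h n)) atTop (nhds 0) := by
    have := (continuous_mm.tendsto 1).comp hh
    rwa [mm_one] at this
  set lam : ℕ → ℝ := fun n => if 0 < mm (h n) then (mm (h n))⁻¹ else 1 with hlam
  have hl : ∀ n, 0 < lam n := by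
    intro n
    simp only [hlam]
    split_ifs with h1
    · positivity
    · exact one_pos
  have hlm : ∀ᶠ n in atTop, lam n * mm (h n) = 1 := by
    filter_upwards [hpos] with n hn
    simp only [hlam, if_pos hn]
    exact inv_mul_cancel₀ hn.ne'
  have hlt : Tendsto lam atTop atTop := by
    have h1 : Tendsto (fun n => (mm (h n))⁻¹) atTop atTop :=
      tendsto_inv_nhdsGT_zero.comp (tendsto_nhdsWithin_iff.2 ⟨lmm, hpos⟩)
    refine h1.congr' ?_
    filter_upwards [hpos] with n hn
    simp only [hlam, if_pos hn]
  constructor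
  · have hk : ∀ k : ℕ, ∃ (a : ℝ) (ha : a ≠ 0) (b : ℝ), |a - 1| ≤ ((k : ℝ) + 2)⁻¹ ∧
        |b| ≤ 4 * ((k : ℝ) + 2)⁻¹ ∧ (a ≠ 1 ∨ b ≠ 0) ∧ pr (tri a ha (b * Complex.I)) ∈
        seqLimsup (fun n => {x | ∃ t ∈ T n, ∃ s : ℝ, x = uu t * pr (h n) * uu s}) := by
      intro k
      have hδ : 0 < ((k : ℝ) + 2)⁻¹ := by positivity
      have hδ2 : ((k : ℝ) + 2)⁻¹ ≤ 1 / 2 := by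
        rw [inv_le_comm₀ (by positivity) (by norm_num)]; norm_num
      set δ := ((k : ℝ) + 2)⁻¹
      obtain ⟨η, hη, hf⟩ := small_aux T hT lam hl hlt (fun n => -PP (h n) / QQ (h n))
        (fun n => -1 / (h n 1 0).re) δ hδ
      obtain ⟨τ, p, q, r, h1, h2, h3, h4, h5, h6, h7, h8⟩ :=
        core_aux T h hh lam hl hlt hlm η δ hf
      have hτ0 : 0 < |τ| := by linarith
      have h0 : 1 + r * τ ≠ 0 := by
        intro e; rw [e] at h4; norm_num at h4
      have n1 := abs_nonneg p
      have n2 := abs_nonneg r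
      have n3 := Real.sqrt_nonneg |q|
      have hq : |q| ≤ 1 := by
        have : √|q| ≤ 1 := by linarith
        rwa [Real.sqrt_le_one] at this
      refine ⟨1 + r * τ, h0, _, ?_, ?_, ?_, h8 h0⟩
      · rw [add_sub_cancel_left, abs_mul]
        nlinarith
      · rw [abs_div, div_le_iff₀ (abs_pos.2 h0)]
        have e1 : |p * τ + q * τ ^ 2| ≤ |p| * |τ| + |q| * |τ| ^ 2 := by
          refine (abs_add_le _ _).trans ?_
          rw [abs_mul, abs_mul, abs_pow]
        have e2 : |p| * |τ| ≤ δ := by nlinarith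
        have e3 : |q| * |τ| ^ 2 ≤ δ := by
          have : |τ| ^ 2 ≤ δ := by nlinarith
          nlinarith [abs_nonneg q, sq_nonneg |τ|]
        nlinarith
      · by_contra hcon
        push Not at hcon
        obtain ⟨c1, c2⟩ := hcon
        have hτ : τ ≠ 0 := abs_pos.1 hτ0
        have hr : r = 0 := by
          have : r * τ = 0 := by linarith
          exact (mul_eq_zero.1 this).resolve_right hτ
        have c3 : p + q * τ = 0 := by
          rw [div_eq_zero_iff] at c2
          have : τ * (p + q * τ) = 0 := by
            have := c2.resolve_right h0; linarith
          exact (mul_eq_zero.1 this).resolve_left hτ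
        rw [c3] at h6 h7
        simp only [abs_zero, mul_zero] at h6 h7
        have hp : p = 0 := abs_eq_zero.1 (le_antisymm h6 n1)
        have hq : q = 0 := by
          have := abs_eq_zero.1 (le_antisymm h7 (abs_nonneg _))
          exact (mul_eq_zero.1 this).resolve_right hτ
        rw [hp, hq, hr] at h3
        simp at h3
    choose a ha b h1 h2 h3 h4 using hk
    have hzero : Tendsto (fun k : ℕ => ((k : ℝ) + 2)⁻¹) atTop (nhds 0) :=
      (tendsto_atTop_add_const_right _ _ tendsto_natCast_atTop_atTop).inv_tendsto_atTop
    have lb : Tendsto b atTop (nhds 0) := by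
      refine squeeze_zero_norm h2 ?_
      simpa using hzero.const_mul 4
    have la : Tendsto a atTop (nhds 1) := by
      rw [tendsto_iff_norm_sub_tendsto_zero]
      exact squeeze_zero (fun _ => norm_nonneg _) h1 hzero
    refine ⟨fun k => pr (tri (a k) (ha k) (b k * Complex.I)),
      fun k => ⟨⟨tri_mem_AV _ _ _, h4 k⟩, ?_⟩, ?_⟩
    · intro e
      rw [← map_one pr] at e
      obtain ⟨ε, hε, e⟩ := pr_eq_imp e.symm
      have e00 := e 0 0
      have e01 := e 0 1
      simp [tri] at e00 e01
      have hb : b k = 0 := e01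
      have hak : a k ≠ 1 := (h3 k).resolve_right (fun h => h hb)
      rcases hε with rfl | rfl
      · exact hak (by exact_mod_cast e00)
      · have : a k = -1 := by exact_mod_cast e00
        have h := h1 k
        rw [this] at h
        have : ((k : ℝ) + 2)⁻¹ ≤ 1 / 2 := by
          rw [inv_le_comm₀ (by positivity) (by norm_num)]; norm_num
        norm_num at h
        linarith
    · have lm : Tendsto (fun k => tri (a k) (ha k) (b k * Complex.I)) atTop (nhds 1) := by
        have lac : Tendsto (fun k => (a k : ℂ)) atTop (nhds 1) := by
          simpa [Function.comp_def] using (Complex.continuous_ofReal.tendsto _).comp la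
        have lbc : Tendsto (fun k => (b k : ℂ) * Complex.I) atTop (nhds 0) := by
          simpa using ((Complex.continuous_ofReal.tendsto _).comp lb).mul_const Complex.I
        apply tendsto_SL2C
        intro i j
        fin_cases i <;> fin_cases j
        · simpa [tri] using lac
        · simpa [tri] using lbc
        · simp [tri]
        · simpa [tri] using lac.inv₀ one_ne_zero
      have := (continuous_pr.tendsto _).comp lm
      rwa [map_one] at this
  · obtain ⟨F, hF, hFe⟩ := exists_size
    have hk : ∀ k : ℕ, ∃ x ∈ AVset ∩
        seqLimsup (fun n => {x | ∃ t ∈ T n, ∃ s : ℝ, x = uu t * pr (h n) * uu s}),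
        (k : ℝ) ≤ F x := by
      intro k
      -- choose the radius large
      set R : ℝ := 18 * ((k : ℝ) + 1) ^ 2 with hRdef
      have hR : 0 < R := by positivity
      obtain ⟨M, hM, hf⟩ := large_aux T hT lam hl hlt (fun n => -PP (h n) / QQ (h n))
        (fun n => -1 / (h n 1 0).re) R hR
      obtain ⟨τ, p, q, r, h1, h2, h3, h4, h5, h6, h7, h8⟩ :=
        core_aux T h hh lam hl hlt hlm R M hf
      have h0 : 1 + r * τ ≠ 0 := by
        intro e; rw [e] at h4; norm_num at h4
      refine ⟨_, ⟨tri_mem_AV _ _ _, h8 h0⟩, ?_⟩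
      rw [hFe]
      have f1 : ‖tri (1 + r * τ) h0 (((p * τ + q * τ ^ 2) / (1 + r * τ) : ℝ) * Complex.I) 0 0‖
          = |1 + r * τ| := by
        rw [← Real.norm_eq_abs, ← Complex.norm_real]; rfl
      have f2 : ‖tri (1 + r * τ) h0 (((p * τ + q * τ ^ 2) / (1 + r * τ) : ℝ) * Complex.I) 0 1‖
          = |(p * τ + q * τ ^ 2) / (1 + r * τ)| := by
        rw [← Real.norm_eq_abs, ← Complex.norm_real]
        show ‖_ * Complex.I‖ = _
        rw [norm_mul, Complex.norm_I, mul_one]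
      rw [f1, f2]
      have hk0 : (0 : ℝ) ≤ k := Nat.cast_nonneg k
      have hRk : 18 * ((k : ℝ) + 1) ≤ R := by rw [hRdef]; nlinarith
      have n1 := abs_nonneg (1 + r * τ)
      have n2 := abs_nonneg ((p * τ + q * τ ^ 2) / (1 + r * τ))
      have hprod : |1 + r * τ| * |(p * τ + q * τ ^ 2) / (1 + r * τ)| = |τ| * |p + q * τ| := by
        rw [← abs_mul, mul_div_cancel₀ _ h0, ← abs_mul]; congr 1; ring
      have hcases : 1 / 3 ≤ |r| ∨ 1 / 3 ≤ |p| ∨ 1 / 3 ≤ √|q| := by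
        by_contra hc
        push Not at hc
        linarith [hc.1, hc.2.1, hc.2.2]
      have hfin : R / 18 ≤ |τ| * |p + q * τ| →
          (k : ℝ) ≤ |1 + r * τ| + |(p * τ + q * τ ^ 2) / (1 + r * τ)| := by
        intro hh
        rw [← hprod] at hh
        by_contra hc
        push Not at hc
        rw [hRdef] at hh
        nlinarith
      have hτ1 : 1 ≤ |τ| := by nlinarith
      rcases hcases with hc | hc | hc
      · rw [abs_mul] at h5
        nlinarith
      · apply hfin
        nlinarith
      · apply hfin
        have hq : 1 / 9 ≤ |q| := by
          have := Real.sq_sqrt (abs_nonneg q)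
          nlinarith
        rw [abs_mul] at h7
        have : 1 / 9 ≤ |q| * |τ| := by nlinarith
        have : 1 / 18 ≤ |p + q * τ| := by linarith
        nlinarith
    choose x hx hxF using hk
    refine ⟨x, hx, fun K hK => ?_⟩
    obtain ⟨B, hB⟩ := (hK.image hF).bddAbove
    filter_upwards [(tendsto_natCast_atTop_atTop (R := ℝ)).eventually_gt_atTop B] with k hk hxK
    have := hB ⟨x k, hxK, rfl⟩
    linarith [hxF k]


end
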